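/- Let m ≥ 3 be an integer. There is a constant C (depending on m) such that for every locally absolutely continuous z : (0,∞) → ℂ with ‖z‖_X < ∞ satisfying the orthogonality condition ∫₀^∞ z(ρ) h₁(ρ) ρ dρ = 0, one has ‖z‖_X ≤ C ‖L₀ z‖_{L²(ρ dρ)}. -/

import Mathlib

open MeasureTheory Set Real Filter
open scoped ENNReal

noncomputable section

abbrev V3 := Fin 3 → ℝ
abbrev V2 := Fin 2 → ℝ

/-- cross product in ℝ³ -/
def cross3 (a b : V3) : V3 :=
  ![a 1 * b 2 - a 2 * b 1, a 2 * b 0 - a 0 * b 2, a 0 * b 1 - a 1 * b 0]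

/-- dot product in ℝ³ -/
def dot3 (a b : V3) : ℝ := a 0 * b 0 + a 1 * b 1 + a 2 * b 2

/-- squared euclidean norm in ℝ³ -/
def nsq3 (a : V3) : ℝ := a 0 ^ 2 + a 1 ^ 2 + a 2 ^ 2

/-- the generator R of rotations about the x₃-axis -/
def Rv (a : V3) : V3 := ![-a 1, a 0, 0]

/-- the rotation e^{αR} about the x₃-axis -/
def rotZ (α : ℝ) (a : V3) : V3 :=
  ![Real.cos α * a 0 - Real.sin α * a 1, Real.sin α * a 0 + Real.cos α * a 1, a 2]

def kHat : V3 := ![0, 0, 1]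
def negkHat : V3 := ![0, 0, -1]
def jHat : V3 := ![0, 1, 0]

/-- first component of the harmonic map profile -/
def h1f (m : ℕ) (r : ℝ) : ℝ := 2 / (r ^ (m : ℤ) + r ^ (-(m : ℤ)))

/-- third component of the harmonic map profile -/
def h3f (m : ℕ) (r : ℝ) : ℝ := (r ^ (m : ℤ) - r ^ (-(m : ℤ))) / (r ^ (m : ℤ) + r ^ (-(m : ℤ)))

/-- the harmonic map profile h -/
def hProf (m : ℕ) (r : ℝ) : V3 := ![h1f m r, 0, h3f m r]

/-- the r-derivative of the harmonic map profile -/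
def dhProf (m : ℕ) (r : ℝ) : V3 :=
  ![-((m : ℝ) / r) * h1f m r * h3f m r, 0, ((m : ℝ) / r) * (h1f m r) ^ 2]

/-- profile of the harmonic map e^{(mθ+α)R} h(r/s) -/
def harmP (m : ℕ) (s α : ℝ) (r : ℝ) : V3 := rotZ α (hProf m (r / s))

/-- its r-derivative -/
def dharmP (m : ℕ) (s α : ℝ) (r : ℝ) : V3 := fun i => (1 / s) * rotZ α (dhProf m (r / s)) i

/-- `v` is locally absolutely continuous on (0,∞), with a.e. derivative `dv`. -/
def LocAC (v dv : ℝ → V3) : Prop :=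
  (∀ a b : ℝ, 0 < a → a ≤ b → ∀ i, IntervalIntegrable (fun r => dv r i) volume a b) ∧
  (∀ a b : ℝ, 0 < a → a ≤ b → ∀ i, v b i - v a i = ∫ r in a..b, dv r i)

/-- energy density (w.r.t. dr) of the m-equivariant map with profile (v,dv) -/
def eDen (m : ℕ) (v dv : ℝ → V3) (r : ℝ) : ℝ :=
  (nsq3 (dv r) + ((m : ℝ) ^ 2 / r ^ 2) * ((v r 0) ^ 2 + (v r 1) ^ 2)) * r

/-- the energy E(u) = (1/2)∫|∇u|² of the m-equivariant map with profile (v,dv) -/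
def energy (m : ℕ) (v dv : ℝ → V3) : ℝ := π * ∫ r in Ioi (0:ℝ), eDen m v dv r

/-- membership in the class Σ_m, expressed in terms of the profile (v,dv) -/
def InSigma (m : ℕ) (v dv : ℝ → V3) : Prop :=
  LocAC v dv ∧ (∀ r ∈ Ioi (0:ℝ), nsq3 (v r) = 1) ∧
  IntegrableOn (eDen m v dv) (Ioi (0:ℝ)) ∧
  Tendsto v (nhdsWithin 0 (Ioi 0)) (nhds negkHat) ∧
  Tendsto v atTop (nhds kHat)

/-- squared Ḣ¹(ℝ²) distance between the m-equivariant maps with profiles (v,dv), (w,dw) -/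
def dH1sq (m : ℕ) (v dv w dw : ℝ → V3) : ℝ :=
  2 * π * ∫ r in Ioi (0:ℝ),
    (nsq3 (fun i => dv r i - dw r i)
      + ((m : ℝ) ^ 2 / r ^ 2) * ((v r 0 - w r 0) ^ 2 + (v r 1 - w r 1) ^ 2)) * r

/-- Ḣ¹(ℝ²) distance -/
def dH1 (m : ℕ) (v dv w dw : ℝ → V3) : ℝ := Real.sqrt (dH1sq m v dv w dw)

/-- the polar angle of a point of ℝ² -/
def angleOf (x : V2) : ℝ := Complex.arg ⟨x 0, x 1⟩

/-- the radius of a point of ℝ² -/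
def radOf (x : V2) : ℝ := Real.sqrt ((x 0) ^ 2 + (x 1) ^ 2)

/-- the m-equivariant map u(r,θ) = e^{mθR} v(r) -/
def eqMap (m : ℕ) (v : ℝ → V3) (x : V2) : V3 := rotZ ((m : ℝ) * angleOf x) (v (radOf x))

/-- the spatial gradient ∂_j u of the m-equivariant map with profile (v,dv) -/
def eqGrad (m : ℕ) (v dv : ℝ → V3) (x : V2) (j : Fin 2) : V3 :=
  rotZ ((m : ℝ) * angleOf x) (fun i =>
    (x j / radOf x) * dv (radOf x) i
      + ((m : ℝ) * (if j = 0 then -(x 1) else x 0) / radOf x ^ 2) * Rv (v (radOf x)) i)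

/-- weak (distributional) form of the Schrödinger map equation ∂ₜu = u × Δu on the time
interval I, for the m-equivariant map with time-dependent profile (v,dv):
∫∫ { u·φ_t - Σ_j (u × ∂_j u)·∂_j φ } dx dt = 0 for all C¹ compactly supported φ. -/
def WeakSM (m : ℕ) (I : Set ℝ) (v dv : ℝ → ℝ → V3) : Prop :=
  ∀ φ : ℝ → V2 → V3,
    (∀ i, ContDiff ℝ 1 (fun q : ℝ × V2 => φ q.1 q.2 i)) →
    (∀ i, HasCompactSupport (fun q : ℝ × V2 => φ q.1 q.2 i)) →
    (∀ t, t ∉ interior I → ∀ x, φ t x = 0) →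
    (∫ t in I, ∫ x : V2,
      (dot3 (eqMap m (v t) x) (fun i => deriv (fun τ => φ τ x i) t)
        - ∑ j : Fin 2, dot3 (cross3 (eqMap m (v t) x) (eqGrad m (v t) (dv t) x j))
            (fun i => fderiv ℝ (fun y => φ t y i) x (Pi.single j 1)))) = 0

/-- continuity in t of the map t ↦ u(t) with respect to the Ḣ¹ distance, on I -/
def H1Cont (m : ℕ) (I : Set ℝ) (v dv : ℝ → ℝ → V3) : Prop :=
  ∀ t₀ ∈ I, ∀ ε > (0:ℝ), ∃ η > (0:ℝ), ∀ t ∈ I, |t - t₀| < η →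
    dH1 m (v t) (dv t) (v t₀) (dv t₀) < ε

/-- a weak solution of the Schrödinger map equation in the class C(I; Σ_m), with
initial profile v₀ -/
def SolClass (m : ℕ) (I : Set ℝ) (v dv : ℝ → ℝ → V3) (v₀ : ℝ → V3) : Prop :=
  (∀ r ∈ Ioi (0:ℝ), v 0 r = v₀ r) ∧ WeakSM m I v dv ∧
  (∀ t ∈ I, InSigma m (v t) (dv t)) ∧ H1Cont m I v dv

/-- the profile of Δu for the m-equivariant map u with profile (v,dv,ddv):
Δu = e^{mθR}( v_rr + v_r/r + (m²/r²) R² v ) -/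
def lapP (m : ℕ) (v dv ddv : ℝ → V3) (r : ℝ) : V3 := fun i =>
  ddv r i + dv r i / r + ((m : ℝ) ^ 2 / r ^ 2) * (![-(v r 0), -(v r 1), 0] : V3) i

/-- squared Ḣ² distance (via the Laplacian) -/
def dH2sq (m : ℕ) (v dv ddv w dw ddw : ℝ → V3) : ℝ :=
  2 * π * ∫ r in Ioi (0:ℝ), nsq3 (fun i => lapP m v dv ddv r i - lapP m w dw ddw r i) * r


/-- `z` is locally absolutely continuous on (0,∞), with a.e. derivative `dz`. -/
def LocACC (z dz : ℝ → ℂ) : Prop :=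
  (∀ a b : ℝ, 0 < a → a ≤ b → IntervalIntegrable dz volume a b) ∧
  (∀ a b : ℝ, 0 < a → a ≤ b → z b - z a = ∫ ρ in a..b, dz ρ)

/-- the density (w.r.t. dρ) of the squared X-norm: (|z'|² + |z|²/ρ²) ρ -/
def xDen (z dz : ℝ → ℂ) (ρ : ℝ) : ℝ := (‖dz ρ‖ ^ 2 + ‖z ρ‖ ^ 2 / ρ ^ 2) * ρ

/-- the X-norm ‖z‖_X = (∫ (|z'|² + |z|²/ρ²) ρ dρ)^{1/2} -/
def normX (z dz : ℝ → ℂ) : ℝ := Real.sqrt (∫ ρ in Ioi (0:ℝ), xDen z dz ρ)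

/-- the operator L₀ = ∂_ρ + (m/ρ) h₃(ρ) -/
def L0op (m : ℕ) (z dz : ℝ → ℂ) (ρ : ℝ) : ℂ :=
  dz ρ + ((((m : ℝ) / ρ) * h3f m ρ : ℝ) : ℂ) * z ρ

/-!
The profile `h₁` spans the kernel of `L₀`, so `u = z - z(1) h₁` satisfies `L₀ u = L₀ z` and
`u(1) = 0`. Multiplying `L₀ u` by `(2σ - h₃) ū`, with `σ = sign (ρ - 1)`, and integrating by parts
separately on `(0, 1)` and `(1, ∞)` gives the Hardy-type inequality `∫ |u|²/ρ ≤ 16 ∫ |L₀ u|² ρ`: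
the boundary terms at `1` vanish, those at the outer ends have a favourable sign, and so has the
potential because `σ h₃ ≥ 0`. The orthogonality condition reads `z(1) ∫ h₁ w = -∫ u w` with
`w = ρ h₁`, and Cauchy–Schwarz then bounds `|z(1)|` by the weighted norm of `u`.
-/

section GeneralAnalysis

lemma norm_add_sq_le {E : Type*} [SeminormedAddGroup E] (x y : E) :
    ‖x + y‖ ^ 2 ≤ 2 * ‖x‖ ^ 2 + 2 * ‖y‖ ^ 2 := by
  grw [norm_add_le, add_sq_le, mul_add]

lemma absolutelyContinuousOnInterval_of_dist_le {X Y : Type*} [PseudoMetricSpace X]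
    [PseudoMetricSpace Y] {f : ℝ → X} {g : ℝ → Y} {a b : ℝ}
    (hg : AbsolutelyContinuousOnInterval g a b)
    (hfg : ∀ x ∈ uIcc a b, ∀ y ∈ uIcc a b, dist (f x) (f y) ≤ dist (g x) (g y)) :
    AbsolutelyContinuousOnInterval f a b := by
  refine squeeze_zero' (Eventually.of_forall fun _ => by positivity) ?_ hg
  filter_upwards [mem_inf_of_right (mem_principal_self _)] with E hE
  exact Finset.sum_le_sum fun i hi => hfg _ (hE.1 i hi).1 _ (hE.1 i hi).2

section Primitive

variable {E : Type*} [NormedAddCommGroup E] {u du : ℝ → E} {a b : ℝ}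

lemma absolutelyContinuousOnInterval_of_sub_eq_integral [NormedSpace ℝ E]
    (hdu : IntervalIntegrable du volume a b)
    (hu : ∀ x ∈ uIcc a b, ∀ y ∈ uIcc a b, u y - u x = ∫ t in x..y, du t) :
    AbsolutelyContinuousOnInterval u a b := by
  have hint : ∀ x ∈ uIcc a b, IntervalIntegrable (fun t => ‖du t‖) volume a x := fun x hx =>
    hdu.norm.mono_set (uIcc_subset_uIcc_left hx)
  refine absolutelyContinuousOnInterval_of_dist_le
    (hdu.norm.absolutelyContinuousOnInterval_intervalIntegral left_mem_uIcc) fun x hx y hy => ?_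
  rw [dist_comm, dist_eq_norm, hu x hx y hy, dist_comm, Real.dist_eq,
    intervalIntegral.integral_interval_sub_left (hint y hy) (hint x hx)]
  exact intervalIntegral.norm_integral_le_abs_integral_norm

lemma ae_hasDerivAt_of_sub_eq_integral [NormedSpace ℝ E] [CompleteSpace E]
    (hdu : IntervalIntegrable du volume a b)
    (hu : ∀ x ∈ uIcc a b, ∀ y ∈ uIcc a b, u y - u x = ∫ t in x..y, du t) :
    ∀ᵐ x, x ∈ uIoc a b → HasDerivAt u (du x) x := by
  filter_upwards [hdu.ae_hasDerivAt_integral, compl_mem_ae_iff.2 (measure_singleton (max a b))]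
    with x hx hxb hxab
  have hnhds : uIcc a b ∈ nhds x :=
    Icc_mem_nhds hxab.1 (lt_of_le_of_ne hxab.2 hxb)
  refine ((hx (mem_of_mem_nhds hnhds) a left_mem_uIcc).const_add (u a)).congr_of_eventuallyEq ?_
  filter_upwards [hnhds] with y hy
  rw [← hu a left_mem_uIcc y hy, add_sub_cancel]

lemma integral_deriv_mul_norm_sq [InnerProductSpace ℝ E] [CompleteSpace E] {φ φ' : ℝ → ℝ}
    (hφ : ContDiffOn ℝ 1 φ (uIcc a b)) (hφ' : ∀ x ∈ uIoc a b, HasDerivAt φ (φ' x) x)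
    (hdu : IntervalIntegrable du volume a b)
    (hu : ∀ x ∈ uIcc a b, ∀ y ∈ uIcc a b, u y - u x = ∫ t in x..y, du t) :
    IntervalIntegrable (fun x => φ' x * ‖u x‖ ^ 2 + φ x * (2 * inner ℝ (u x) (du x))) volume a b ∧
      ∫ x in a..b, (φ' x * ‖u x‖ ^ 2 + φ x * (2 * inner ℝ (u x) (du x))) =
        φ b * ‖u b‖ ^ 2 - φ a * ‖u a‖ ^ 2 := by
  have hnorm : AbsolutelyContinuousOnInterval (fun x => ‖u x‖) a b :=
    absolutelyContinuousOnInterval_of_dist_le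
      (absolutelyContinuousOnInterval_of_sub_eq_integral hdu hu) fun x _ y _ =>
        (dist_norm_norm_le _ _).trans_eq (dist_eq_norm _ _).symm
  have hac : AbsolutelyContinuousOnInterval (fun x => φ x * ‖u x‖ ^ 2) a b := by
    simpa only [sq] using hφ.absolutelyContinuousOnInterval.fun_mul (hnorm.fun_mul hnorm)
  have hderiv : ∀ᵐ x, x ∈ uIoc a b → deriv (fun x => φ x * ‖u x‖ ^ 2) x =
      φ' x * ‖u x‖ ^ 2 + φ x * (2 * inner ℝ (u x) (du x)) := by
    filter_upwards [ae_hasDerivAt_of_sub_eq_integral hdu hu] with x hx hxab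
    exact ((hφ' x hxab).fun_mul (hx hxab).norm_sq).deriv
  exact ⟨hac.intervalIntegrable_deriv.congr_ae ((ae_restrict_iff' measurableSet_uIoc).2 hderiv),
    by rw [← intervalIntegral.integral_congr_ae hderiv, hac.integral_deriv_eq_sub]⟩

end Primitive

lemma aecover_Ioc_one_div_nat : AECover (volume.restrict (Ioi (0 : ℝ))) atTop
    (fun n : ℕ => Ioc (1 / ((n : ℝ) + 1)) ((n : ℝ) + 1)) := by
  simp_rw [← Ioi_inter_Iic]
  exact (aecover_Ioi_of_Ioi tendsto_one_div_add_atTop_nhds_zero_nat).inter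
    (aecover_Iic (tendsto_atTop_add_const_right _ _ tendsto_natCast_atTop_atTop))

lemma integrableOn_Ioi_of_intervalIntegral_le {F : ℝ → ℝ} {I : ℝ} (hF0 : ∀ x ∈ Ioi 0, 0 ≤ F x)
    (hF : ∀ a ∈ Ioc 0 1, ∀ b ∈ Ici 1, IntervalIntegrable F volume a b)
    (hI : ∀ a ∈ Ioc 0 1, ∀ b ∈ Ici 1, ∫ x in a..b, F x ≤ I) :
    IntegrableOn F (Ioi 0) ∧ ∫ x in Ioi 0, F x ≤ I := by
  have hcover := aecover_Ioc_one_div_nat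
  have hb : ∀ n : ℕ, (n : ℝ) + 1 ∈ Ici 1 := fun n => by simp
  have ha : ∀ n : ℕ, 1 / ((n : ℝ) + 1) ∈ Ioc 0 1 := fun n =>
    ⟨by positivity, div_le_one_of_le₀ (hb n) (by positivity)⟩
  have hle : ∀ n : ℕ, 1 / ((n : ℝ) + 1) ≤ n + 1 := fun n => (ha n).2.trans (hb n)
  have hrestrict : ∀ n : ℕ, (volume.restrict (Ioi (0 : ℝ))).restrict
      (Ioc (1 / ((n : ℝ) + 1)) (n + 1)) = volume.restrict (Ioc (1 / ((n : ℝ) + 1)) (n + 1)) :=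
    fun n => Measure.restrict_restrict_of_subset fun x hx => (ha n).1.trans hx.1
  have hnonneg : ∀ᵐ x ∂volume.restrict (Ioi (0 : ℝ)), 0 ≤ F x :=
    ae_restrict_of_forall_mem measurableSet_Ioi hF0
  have hbound : ∀ n : ℕ, ∫ x in Ioc (1 / ((n : ℝ) + 1)) (n + 1), F x ∂volume.restrict (Ioi 0) ≤ I :=
    fun n => by
      rw [hrestrict, ← intervalIntegral.integral_of_le (hle n)]
      exact hI _ (ha n) _ (hb n)
  have hint : IntegrableOn F (Ioi 0) :=
    hcover.integrable_of_integral_bounded_of_nonneg_ae I (fun n => by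
      rw [IntegrableOn, hrestrict]
      exact (hF _ (ha n) _ (hb n)).1) hnonneg (Eventually.of_forall hbound)
  exact ⟨hint, le_of_tendsto' (hcover.integral_tendsto_of_countably_generated hint) hbound⟩

section CauchySchwarz

variable {α 𝕜 : Type*} [MeasurableSpace α] [RCLike 𝕜] {μ : Measure α} {f g : α → 𝕜}

lemma norm_integral_mul_sq_le (hf : MemLp f 2 μ) (hg : MemLp g 2 μ) :
    ‖∫ x, f x * g x ∂μ‖ ^ 2 ≤ (∫ x, ‖f x‖ ^ 2 ∂μ) * ∫ x, ‖g x‖ ^ 2 ∂μ := by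
  have hholder : ∫ x, ‖f x‖ * ‖g x‖ ∂μ ≤
      (∫ x, ‖f x‖ ^ 2 ∂μ) ^ (1 / 2 : ℝ) * (∫ x, ‖g x‖ ^ 2 ∂μ) ^ (1 / 2 : ℝ) := by
    simpa only [Real.rpow_two] using integral_mul_norm_le_Lp_mul_Lq (μ := μ) (f := f) (g := g)
      Real.HolderConjugate.two_two (by simpa using hf) (by simpa using hg)
  calc ‖∫ x, f x * g x ∂μ‖ ^ 2
      ≤ (∫ x, ‖f x‖ * ‖g x‖ ∂μ) ^ 2 := by
        gcongr
        simpa only [norm_mul] using norm_integral_le_integral_norm (μ := μ) fun x => f x * g x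
    _ ≤ ((∫ x, ‖f x‖ ^ 2 ∂μ) ^ (1 / 2 : ℝ) * (∫ x, ‖g x‖ ^ 2 ∂μ) ^ (1 / 2 : ℝ)) ^ 2 := by
        gcongr
    _ = (∫ x, ‖f x‖ ^ 2 ∂μ) * ∫ x, ‖g x‖ ^ 2 ∂μ := by
        rw [← Real.sqrt_eq_rpow, ← Real.sqrt_eq_rpow, mul_pow,
          Real.sq_sqrt (integral_nonneg fun x => by positivity),
          Real.sq_sqrt (integral_nonneg fun x => by positivity)]

lemma integrable_mul_and_norm_integral_mul_sq_le {k : α → ℝ} (hk : AEMeasurable k μ)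
    (hk0 : ∀ᵐ x ∂μ, 0 < k x) (hf : AEStronglyMeasurable f μ) (hg : AEStronglyMeasurable g μ)
    (hf2 : Integrable (fun x => ‖f x‖ ^ 2 / k x) μ)
    (hg2 : Integrable (fun x => ‖g x‖ ^ 2 * k x) μ) :
    Integrable (fun x => f x * g x) μ ∧
      ‖∫ x, f x * g x ∂μ‖ ^ 2 ≤ (∫ x, ‖f x‖ ^ 2 / k x ∂μ) * ∫ x, ‖g x‖ ^ 2 * k x ∂μ := by
  have hsqrt : AEStronglyMeasurable (fun x => ((√(k x) : ℝ) : 𝕜)) μ :=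
    (RCLike.measurable_ofReal.comp_aemeasurable hk.sqrt).aestronglyMeasurable
  have hF : (fun x => ‖f x * ((√(k x) : ℝ) : 𝕜)⁻¹‖ ^ 2) =ᵐ[μ] fun x => ‖f x‖ ^ 2 / k x := by
    filter_upwards [hk0] with x hx
    rw [norm_mul, norm_inv, RCLike.norm_ofReal, mul_pow, inv_pow, sq_abs, Real.sq_sqrt hx.le,
      div_eq_mul_inv]
  have hG : (fun x => ‖((√(k x) : ℝ) : 𝕜) * g x‖ ^ 2) =ᵐ[μ] fun x => ‖g x‖ ^ 2 * k x := by
    filter_upwards [hk0] with x hx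
    rw [norm_mul, RCLike.norm_ofReal, mul_pow, sq_abs, Real.sq_sqrt hx.le, mul_comm]
  have hFG : (fun x => f x * ((√(k x) : ℝ) : 𝕜)⁻¹ * (((√(k x) : ℝ) : 𝕜) * g x)) =ᵐ[μ]
      fun x => f x * g x := by
    filter_upwards [hk0] with x hx
    have : ((√(k x) : ℝ) : 𝕜) ≠ 0 := RCLike.ofReal_ne_zero.2 (Real.sqrt_pos.2 hx).ne'
    field_simp
  have hFp := (memLp_two_iff_integrable_sq_norm (hf.mul hsqrt.inv₀)).2 (hf2.congr hF.symm)
  have hGp := (memLp_two_iff_integrable_sq_norm (hsqrt.mul hg)).2 (hg2.congr hG.symm)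
  refine ⟨(hFp.integrable_mul hGp).congr hFG, ?_⟩
  rw [← integral_congr_ae hF, ← integral_congr_ae hG, ← integral_congr_ae hFG]
  exact norm_integral_mul_sq_le hFp hGp

lemma norm_coeff_mul_sq_le_of_integral_eq_zero {k : α → ℝ} {h : α → 𝕜} {c : 𝕜}
    (hk : AEMeasurable k μ) (hk0 : ∀ᵐ x ∂μ, 0 < k x) (hf : AEStronglyMeasurable f μ)
    (hg : AEStronglyMeasurable g μ) (hf2 : Integrable (fun x => ‖f x‖ ^ 2 / k x) μ)
    (hg2 : Integrable (fun x => ‖g x‖ ^ 2 * k x) μ) (hhg : Integrable (fun x => h x * g x) μ)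
    (horth : ∫ x, (c * h x + f x) * g x ∂μ = 0) :
    (‖c‖ * ‖∫ x, h x * g x ∂μ‖) ^ 2 ≤
      (∫ x, ‖f x‖ ^ 2 / k x ∂μ) * ∫ x, ‖g x‖ ^ 2 * k x ∂μ := by
  obtain ⟨hfg, hcs⟩ := integrable_mul_and_norm_integral_mul_sq_le hk hk0 hf hg hf2 hg2
  have hcoeff : c * ∫ x, h x * g x ∂μ = -∫ x, f x * g x ∂μ := by
    simp only [add_mul, mul_assoc] at horth
    rwa [integral_add (hhg.const_mul c) hfg, integral_const_mul,
      add_eq_zero_iff_eq_neg] at horth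
  rwa [← norm_mul, hcoeff, norm_neg]

end CauchySchwarz

end GeneralAnalysis

section Profile

variable (m : ℕ) {r : ℝ}

lemma h1f_eq (hr : 0 < r) : h1f m r = 2 * r ^ m / ((r ^ m) ^ 2 + 1) := by
  simp only [h1f, zpow_neg, zpow_natCast]
  field_simp

lemma h3f_eq (hr : 0 < r) : h3f m r = ((r ^ m) ^ 2 - 1) / ((r ^ m) ^ 2 + 1) := by
  simp only [h3f, zpow_neg, zpow_natCast]
  field_simp

lemma h1f_one : h1f m 1 = 1 := by norm_num [h1f]

lemma h1f_pos (hr : 0 < r) : 0 < h1f m r := by rw [h1f]; positivity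

lemma h1f_sq_add_h3f_sq (hr : 0 < r) : h1f m r ^ 2 + h3f m r ^ 2 = 1 := by
  rw [h1f_eq m hr, h3f_eq m hr]
  field_simp
  ring

lemma h3f_sq_le_one (hr : 0 < r) : h3f m r ^ 2 ≤ 1 := by
  nlinarith [h1f_sq_add_h3f_sq m hr]

lemma abs_h3f_le_one (hr : 0 < r) : |h3f m r| ≤ 1 :=
  (sq_le_one_iff_abs_le_one _).1 (h3f_sq_le_one m hr)

lemma h1f_le_one (hr : 0 < r) : h1f m r ≤ 1 := by
  nlinarith [h1f_sq_add_h3f_sq m hr]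

lemma h1f_le_two_div_pow (hr : 0 < r) : h1f m r ≤ 2 / r ^ m := by
  rw [h1f_eq m hr, div_le_div_iff₀ (by positivity) (by positivity)]
  nlinarith

lemma h3f_nonneg (hr : 1 ≤ r) : 0 ≤ h3f m r := by
  rw [h3f_eq m (by positivity)]
  exact div_nonneg (sub_nonneg.2 (one_le_pow₀ (one_le_pow₀ hr))) (by positivity)

lemma h3f_nonpos (hr0 : 0 < r) (hr1 : r ≤ 1) : h3f m r ≤ 0 := by
  rw [h3f_eq m hr0]
  exact div_nonpos_of_nonpos_of_nonneg
    (sub_nonpos.2 (pow_le_one₀ (by positivity) (pow_le_one₀ hr0.le hr1))) (by positivity)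

lemma hasDerivAt_pow_div (hr : 0 < r) :
    HasDerivAt (fun x : ℝ => x ^ m) ((m : ℝ) / r * r ^ m) r := by
  refine (hasDerivAt_pow m r).congr_deriv ?_
  rcases m with _ | m
  · simp
  · rw [Nat.add_sub_cancel]
    field_simp
    ring

lemma hasDerivAt_h1f (hr : 0 < r) : HasDerivAt (h1f m) (dhProf m r 0) r := by
  have hpow := hasDerivAt_pow_div m hr
  have hquot : HasDerivAt (fun x : ℝ => 2 * x ^ m / ((x ^ m) ^ 2 + 1)) _ r :=
    (hpow.const_mul 2).div ((hpow.pow 2).add_const 1) (by positivity)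
  refine (hquot.congr_of_eventuallyEq ?_).congr_deriv ?_
  · filter_upwards [Ioi_mem_nhds hr] with x hx using h1f_eq m hx
  · simp only [dhProf, Matrix.cons_val_zero, h1f_eq m hr, h3f_eq m hr]
    field_simp
    push_cast
    ring

lemma contDiffOn_h3f : ContDiffOn ℝ 1 (h3f m) (Ioi 0) := by
  have : ContDiffOn ℝ 1 (fun x : ℝ => ((x ^ m) ^ 2 - 1) / ((x ^ m) ^ 2 + 1)) (Ioi 0) :=
    ContDiffOn.div (by fun_prop) (by fun_prop) fun x _ => by positivity
  exact this.congr fun x hx => h3f_eq m hx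

lemma hasDerivAt_sq_sub_one_div (hr : 0 < r) :
    HasDerivAt (fun x : ℝ => ((x ^ m) ^ 2 - 1) / ((x ^ m) ^ 2 + 1)) (m / r * h1f m r ^ 2) r := by
  have hpow := hasDerivAt_pow_div m hr
  have hquot := ((hpow.fun_pow 2).sub_const 1).fun_div ((hpow.fun_pow 2).add_const 1)
    (by positivity)
  refine hquot.congr_deriv ?_
  rw [h1f_eq m hr]
  field_simp
  push_cast
  ring

lemma hasDerivAt_h3f (hr : 0 < r) : HasDerivAt (h3f m) (m / r * h1f m r ^ 2) r := by
  refine (hasDerivAt_sq_sub_one_div m hr).congr_of_eventuallyEq ?_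
  filter_upwards [Ioi_mem_nhds hr] with x hx using h3f_eq m hx

lemma continuousOn_h1f : ContinuousOn (h1f m) (Ioi 0) := fun _ hx =>
  (hasDerivAt_h1f m hx).continuousAt.continuousWithinAt

lemma continuousOn_h3f : ContinuousOn (h3f m) (Ioi 0) := (contDiffOn_h3f m).continuousOn

variable {m}

/-- `h₁² / ρ` is the derivative of `h₃ / m`, and `h₃` is bounded. -/
lemma integrableOn_h1f_sq_div (hm : 1 ≤ m) : IntegrableOn (fun r => h1f m r ^ 2 / r) (Ioi 0) := by
  have hm0 : (m : ℝ) ≠ 0 := by positivity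
  have hlim : Tendsto (fun x : ℝ => ((x ^ m) ^ 2 - 1) / ((x ^ m) ^ 2 + 1)) atTop (nhds 1) := by
    have hden : Tendsto (fun x : ℝ => 1 - 2 / ((x ^ m) ^ 2 + 1)) atTop (nhds (1 - 0)) :=
      tendsto_const_nhds.sub (tendsto_const_nhds.div_atTop (tendsto_atTop_add_const_right _ _
        ((tendsto_pow_atTop two_ne_zero).comp (tendsto_pow_atTop (by omega)))))
    rw [sub_zero] at hden
    refine hden.congr fun x => ?_
    field_simp
    ring
  have hint : IntegrableOn (fun r => m / r * h1f m r ^ 2) (Ioi 0) := by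
    refine integrableOn_Ioi_deriv_of_nonneg (ContinuousAt.continuousWithinAt ?_)
      (fun r hr => hasDerivAt_sq_sub_one_div m hr) (fun r hr => ?_) hlim
    · exact ContinuousAt.div (by fun_prop) (by fun_prop) (by positivity)
    · exact mul_nonneg (div_nonneg m.cast_nonneg (mem_Ioi.1 hr).le) (sq_nonneg _)
  refine IntegrableOn.congr_fun (hint.const_mul (m : ℝ)⁻¹) (fun r _ => ?_) measurableSet_Ioi
  field_simp

lemma integrableOn_h1f_sq_mul_pow_three (hm : 3 ≤ m) :
    IntegrableOn (fun r => h1f m r ^ 2 * r ^ 3) (Ioi 0) := by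
  refine (integrable_inv_one_add_sq.const_mul 8).integrableOn.mono'
    ((((continuousOn_h1f m).pow 2).mul (by fun_prop)).aestronglyMeasurable measurableSet_Ioi) ?_
  refine ae_restrict_of_forall_mem measurableSet_Ioi fun r (hr : 0 < r) => ?_
  have hpos := h1f_pos m hr
  rw [Real.norm_of_nonneg (by positivity), ← div_eq_mul_inv, le_div_iff₀ (by positivity)]
  rcases le_total r 1 with hr1 | hr1
  · calc h1f m r ^ 2 * r ^ 3 * (1 + r ^ 2) ≤ 1 ^ 2 * 1 ^ 3 * (1 + 1 ^ 2) := by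
          gcongr
          exact h1f_le_one m hr
      _ ≤ 8 := by norm_num
  · have hdecay : h1f m r ≤ 2 / r ^ 3 := (h1f_le_two_div_pow m hr).trans (by gcongr)
    calc h1f m r ^ 2 * r ^ 3 * (1 + r ^ 2) ≤ (2 / r ^ 3) ^ 2 * r ^ 3 * (r ^ 3 + r ^ 3) := by
          gcongr
          · exact one_le_pow₀ hr1
          · norm_num
      _ = 8 := by field_simp; norm_num

lemma integrableOn_h1f_sq_mul (hm : 3 ≤ m) : IntegrableOn (fun r => h1f m r ^ 2 * r) (Ioi 0) := by
  have hdom := (integrableOn_h1f_sq_div (m := m) (by omega)).add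
    (integrableOn_h1f_sq_mul_pow_three hm)
  refine hdom.mono'
    ((((continuousOn_h1f m).pow 2).mul continuousOn_id).aestronglyMeasurable measurableSet_Ioi) ?_
  refine ae_restrict_of_forall_mem measurableSet_Ioi fun r (hr : 0 < r) => ?_
  have hamgm : r ≤ 1 / r + r ^ 3 := by
    field_simp
    nlinarith [sq_nonneg (r ^ 2 - 1)]
  rw [Real.norm_of_nonneg (by positivity)]
  calc h1f m r ^ 2 * r ≤ h1f m r ^ 2 * (1 / r + r ^ 3) := by gcongr
    _ = h1f m r ^ 2 / r + h1f m r ^ 2 * r ^ 3 := by ring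

lemma integral_h1f_sq_mul_pos (hm : 3 ≤ m) : 0 < ∫ r in Ioi 0, h1f m r ^ 2 * r := by
  have hpos : ∀ r ∈ Ioi (0 : ℝ), 0 < h1f m r ^ 2 * r := fun r hr =>
    mul_pos (pow_pos (h1f_pos m hr) 2) hr
  rw [setIntegral_pos_iff_support_of_nonneg_ae
    (ae_restrict_of_forall_mem measurableSet_Ioi fun r hr => (hpos r hr).le)
    (integrableOn_h1f_sq_mul hm),
    inter_eq_right.2 fun r hr => Function.mem_support.2 (hpos r hr).ne']
  simp

end Profile

namespace LocACC

variable {z dz w dw : ℝ → ℂ} {a b : ℝ}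

lemma intervalIntegrable (hz : LocACC z dz) (ha : 0 < a) (hb : 0 < b) :
    IntervalIntegrable dz volume a b :=
  (le_total a b).elim (hz.1 a b ha) fun hba => (hz.1 b a hb hba).symm

lemma sub_eq_integral (hz : LocACC z dz) (ha : 0 < a) (hb : 0 < b) :
    z b - z a = ∫ ρ in a..b, dz ρ := by
  rcases le_total a b with hab | hba
  · exact hz.2 a b ha hab
  · rw [intervalIntegral.integral_symm, ← hz.2 b a hb hba, neg_sub]

lemma continuousOn (hz : LocACC z dz) : ContinuousOn z (Ioi 0) := by
  intro x (hx : 0 < x)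
  have ha : 0 < x / 2 := by positivity
  have hb : 0 < 2 * x := by positivity
  have hpos : uIcc (x / 2) (2 * x) ⊆ Ioi 0 := ordConnected_Ioi.uIcc_subset ha hb
  have hac : AbsolutelyContinuousOnInterval z (x / 2) (2 * x) :=
    absolutelyContinuousOnInterval_of_sub_eq_integral (hz.intervalIntegrable ha hb)
      fun s hs t ht => hz.sub_eq_integral (hpos hs) (hpos ht)
  refine (hac.continuousOn.continuousAt ?_).continuousWithinAt
  rw [uIcc_of_le (by linarith)]
  exact Icc_mem_nhds (by linarith) (by linarith)

lemma aestronglyMeasurable_deriv (hz : LocACC z dz) :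
    AEStronglyMeasurable dz (volume.restrict (Ioi 0)) := by
  refine LocallyIntegrableOn.aestronglyMeasurable fun x (hx : 0 < x) => ?_
  refine ⟨Icc (x / 2) (2 * x),
    mem_nhdsWithin_of_mem_nhds (Icc_mem_nhds (by linarith) (by linarith)), ?_⟩
  exact (intervalIntegrable_iff_integrableOn_Icc_of_le (by linarith)).1
    (hz.intervalIntegrable (by positivity) (by positivity))

lemma sub_const_mul (hz : LocACC z dz) (hw : LocACC w dw) (c : ℂ) :
    LocACC (fun ρ => z ρ - c * w ρ) (fun ρ => dz ρ - c * dw ρ) := by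
  refine ⟨fun a b ha hab => (hz.1 a b ha hab).sub ((hw.1 a b ha hab).const_mul c),
    fun a b ha hab => ?_⟩
  rw [intervalIntegral.integral_sub (hz.1 a b ha hab) ((hw.1 a b ha hab).const_mul c),
    intervalIntegral.integral_const_mul, ← hz.2 a b ha hab, ← hw.2 a b ha hab]
  ring

end LocACC

lemma locACC_of_hasDerivAt {z dz : ℝ → ℂ} (hderiv : ∀ ρ ∈ Ioi 0, HasDerivAt z (dz ρ) ρ)
    (hdz : ContinuousOn dz (Ioi 0)) : LocACC z dz := by
  have hpos : ∀ a b : ℝ, 0 < a → a ≤ b → uIcc a b ⊆ Ioi 0 := fun a b ha hab =>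
    ordConnected_Ioi.uIcc_subset ha (ha.trans_le hab)
  have hint : ∀ a b : ℝ, 0 < a → a ≤ b → IntervalIntegrable dz volume a b := fun a b ha hab =>
    (hdz.mono (hpos a b ha hab)).intervalIntegrable
  exact ⟨hint, fun a b ha hab => (intervalIntegral.integral_eq_sub_of_hasDerivAt
    (fun x hx => hderiv x (hpos a b ha hab hx)) (hint a b ha hab)).symm⟩

section L0

variable (m : ℕ)

lemma locACC_h1f : LocACC (fun ρ => (h1f m ρ : ℂ)) (fun ρ => (dhProf m ρ 0 : ℂ)) := by
  refine locACC_of_hasDerivAt (fun ρ hρ => (hasDerivAt_h1f m hρ).ofReal_comp) ?_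
  refine Complex.continuous_ofReal.comp_continuousOn ?_
  exact ((continuousOn_const.div continuousOn_id fun ρ hρ => (mem_Ioi.1 hρ).ne').neg.mul
    (continuousOn_h1f m)).mul (continuousOn_h3f m)

variable (z dz : ℝ → ℂ)

lemma L0op_sub_const_mul_h1f (c : ℂ) :
    L0op m (fun ρ => z ρ - c * h1f m ρ) (fun ρ => dz ρ - c * dhProf m ρ 0) = L0op m z dz := by
  funext ρ
  simp only [L0op, dhProf, Matrix.cons_val_zero]
  push_cast
  ring

variable {m z dz}

lemma LocACC.aestronglyMeasurable_L0op (hz : LocACC z dz) :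
    AEStronglyMeasurable (L0op m z dz) (volume.restrict (Ioi 0)) := by
  refine hz.aestronglyMeasurable_deriv.add (ContinuousOn.aestronglyMeasurable ?_ measurableSet_Ioi)
  refine (Complex.continuous_ofReal.comp_continuousOn ?_).mul hz.continuousOn
  exact (continuousOn_const.div continuousOn_id fun ρ hρ => (mem_Ioi.1 hρ).ne').mul
    (continuousOn_h3f m)

lemma norm_potential_mul_sq_le {ρ : ℝ} (hρ : 0 < ρ) (ζ : ℂ) :
    ‖((m / ρ * h3f m ρ : ℝ) : ℂ) * ζ‖ ^ 2 ≤ m ^ 2 * (‖ζ‖ ^ 2 / ρ ^ 2) := by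
  rw [norm_mul, Complex.norm_real, mul_pow, Real.norm_eq_abs, sq_abs, mul_pow]
  calc (m / ρ) ^ 2 * h3f m ρ ^ 2 * ‖ζ‖ ^ 2 ≤ (m / ρ) ^ 2 * 1 * ‖ζ‖ ^ 2 := by
        gcongr
        exact h3f_sq_le_one m hρ
    _ = m ^ 2 * (‖ζ‖ ^ 2 / ρ ^ 2) := by ring

lemma norm_L0op_sq_mul_le {ρ : ℝ} (hρ : 0 < ρ) :
    ‖L0op m z dz ρ‖ ^ 2 * ρ ≤ (2 + 2 * m ^ 2) * xDen z dz ρ := by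
  calc ‖L0op m z dz ρ‖ ^ 2 * ρ
      ≤ (2 * ‖dz ρ‖ ^ 2 + 2 * (m ^ 2 * (‖z ρ‖ ^ 2 / ρ ^ 2))) * ρ := by
        grw [L0op, norm_add_sq_le, norm_potential_mul_sq_le hρ]
    _ ≤ (2 * ‖dz ρ‖ ^ 2 + 2 * (m ^ 2 * (‖z ρ‖ ^ 2 / ρ ^ 2))) * ρ
        + (2 * m ^ 2 * ‖dz ρ‖ ^ 2 + 2 * (‖z ρ‖ ^ 2 / ρ ^ 2)) * ρ :=
        le_add_of_nonneg_right (by positivity)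
    _ = (2 + 2 * m ^ 2) * xDen z dz ρ := by rw [xDen]; ring

lemma xDen_le {ρ : ℝ} (hρ : 0 < ρ) :
    xDen z dz ρ ≤ 2 * (‖L0op m z dz ρ‖ ^ 2 * ρ) + (2 * m ^ 2 + 1) * (‖z ρ‖ ^ 2 / ρ) := by
  have hdz : dz ρ = L0op m z dz ρ + -(((m / ρ * h3f m ρ : ℝ) : ℂ) * z ρ) := by
    rw [L0op, add_neg_cancel_right]
  calc xDen z dz ρ
      ≤ (2 * ‖L0op m z dz ρ‖ ^ 2 + 2 * (m ^ 2 * (‖z ρ‖ ^ 2 / ρ ^ 2)) + ‖z ρ‖ ^ 2 / ρ ^ 2) * ρ := by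
        grw [xDen, hdz, norm_add_sq_le, norm_neg, norm_potential_mul_sq_le hρ]
    _ = 2 * (‖L0op m z dz ρ‖ ^ 2 * ρ) + (2 * m ^ 2 + 1) * (‖z ρ‖ ^ 2 / ρ) := by
        field_simp
        ring

lemma LocACC.integrableOn_norm_L0op_sq_mul (hz : LocACC z dz)
    (hX : IntegrableOn (xDen z dz) (Ioi 0)) :
    IntegrableOn (fun ρ => ‖L0op m z dz ρ‖ ^ 2 * ρ) (Ioi 0) := by
  refine (hX.const_mul (2 + 2 * (m : ℝ) ^ 2)).mono'
    ((hz.aestronglyMeasurable_L0op.norm.pow 2).mul aestronglyMeasurable_id)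
    (ae_restrict_of_forall_mem measurableSet_Ioi fun ρ (hρ : 0 < ρ) => ?_)
  rw [Real.norm_of_nonneg (by positivity)]
  exact norm_L0op_sq_mul_le hρ

lemma LocACC.aestronglyMeasurable_xDen (hz : LocACC z dz) :
    AEStronglyMeasurable (xDen z dz) (volume.restrict (Ioi 0)) := by
  refine ((hz.aestronglyMeasurable_deriv.norm.pow 2).add ?_).mul aestronglyMeasurable_id
  exact ((hz.continuousOn.norm.pow 2).div (by fun_prop) fun ρ hρ =>
    pow_ne_zero 2 (mem_Ioi.1 hρ).ne').aestronglyMeasurable measurableSet_Ioi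

lemma LocACC.integrableOn_xDen (hz : LocACC z dz)
    (hL : IntegrableOn (fun ρ => ‖L0op m z dz ρ‖ ^ 2 * ρ) (Ioi 0))
    (hz2 : IntegrableOn (fun ρ => ‖z ρ‖ ^ 2 / ρ) (Ioi 0)) :
    IntegrableOn (xDen z dz) (Ioi 0) ∧ ∫ ρ in Ioi 0, xDen z dz ρ ≤
      2 * (∫ ρ in Ioi 0, ‖L0op m z dz ρ‖ ^ 2 * ρ) +
        (2 * m ^ 2 + 1) * ∫ ρ in Ioi 0, ‖z ρ‖ ^ 2 / ρ := by
  have hmaj := (hL.const_mul 2).add (hz2.const_mul (2 * (m : ℝ) ^ 2 + 1))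
  have hint : IntegrableOn (xDen z dz) (Ioi 0) := by
    refine hmaj.mono' hz.aestronglyMeasurable_xDen
      (ae_restrict_of_forall_mem measurableSet_Ioi fun ρ (hρ : 0 < ρ) => ?_)
    rw [Real.norm_of_nonneg (by rw [xDen]; positivity)]
    exact xDen_le hρ
  refine ⟨hint,
    (setIntegral_mono_on hint hmaj measurableSet_Ioi fun ρ hρ => xDen_le hρ).trans_eq ?_⟩
  simp only [Pi.add_apply]
  rw [integral_add (hL.const_mul 2) (hz2.const_mul _), integral_const_mul, integral_const_mul]

end L0

section Hardy

variable {m : ℕ} {u du : ℝ → ℂ}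

lemma real_inner_deriv_eq (x : ℝ) : inner ℝ (u x) (du x) =
    inner ℝ (u x) (L0op m u du x) - m / x * h3f m x * ‖u x‖ ^ 2 := by
  rw [L0op, inner_add_right, ← Complex.real_smul, real_inner_smul_right,
    real_inner_self_eq_norm_sq, add_sub_cancel_right]

lemma abs_multiplier_le_two {σ h : ℝ} (hσ : σ ^ 2 = 1) (hσh : 0 ≤ σ * h) (hh : h ^ 2 ≤ 1) :
    |2 * σ - h| ≤ 2 := by
  refine abs_le_of_sq_le_sq ?_ zero_le_two
  have : (σ * h) ^ 2 = h ^ 2 := by rw [mul_pow, hσ, one_mul]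
  nlinarith

/-- The bracket is the derivative of `φ ‖u‖²` for the multiplier `φ = 2σ - h₃`. With
`s = σ h₃ ∈ [0, 1]`, the potential contributes `(m/x) (1 + 4s - 3s²) ≥ m/x` to it. -/
lemma norm_sq_div_le_of_multiplier {σ x : ℝ} (hx : 0 < x) (hσ : σ ^ 2 = 1)
    (hσh : 0 ≤ σ * h3f m x) :
    m ^ 2 * (‖u x‖ ^ 2 / x) ≤ 16 * (‖L0op m u du x‖ ^ 2 * x) -
      2 * m * (-(m / x * h1f m x ^ 2) * ‖u x‖ ^ 2 +
        (2 * σ - h3f m x) * (2 * inner ℝ (u x) (du x))) := by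
  have hh1 : h1f m x ^ 2 = 1 - h3f m x ^ 2 := eq_sub_of_add_eq (h1f_sq_add_h3f_sq m hx)
  rw [hh1, real_inner_deriv_eq (m := m)]
  have hh2 : h3f m x ^ 2 ≤ 1 := h3f_sq_le_one m hx
  set h := h3f m x
  set f := L0op m u du x
  have hs2 : (σ * h) ^ 2 = h ^ 2 := by rw [mul_pow, hσ, one_mul]
  have hs1 : σ * h ≤ 1 := by nlinarith
  have hcross : (2 * σ - h) * inner ℝ (u x) f ≤ 2 * (‖u x‖ * ‖f‖) :=
    calc (2 * σ - h) * inner ℝ (u x) f ≤ |2 * σ - h| * |inner ℝ (u x) f| :=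
          (le_abs_self _).trans_eq (abs_mul _ _)
      _ ≤ 2 * (‖u x‖ * ‖f‖) := mul_le_mul (abs_multiplier_le_two hσ hσh hh2)
          (abs_real_inner_le_norm _ _) (abs_nonneg _) zero_le_two
  have hyoung : 8 * m * (‖u x‖ * ‖f‖) ≤ m ^ 2 * (‖u x‖ ^ 2 / x) + 16 * (‖f‖ ^ 2 * x) := by
    have : m ^ 2 * (‖u x‖ ^ 2 / x) + 16 * (‖f‖ ^ 2 * x) - 8 * m * (‖u x‖ * ‖f‖) =
      (m * ‖u x‖ - 4 * ‖f‖ * x) ^ 2 / x := by field_simp; ring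
    rw [← sub_nonneg, this]
    positivity
  have hpot : m ^ 2 * (‖u x‖ ^ 2 / x) ≤
      m ^ 2 * (‖u x‖ ^ 2 / x) * (1 + 4 * (σ * h) - 3 * (σ * h) ^ 2) :=
    le_mul_of_one_le_right (by positivity) (by nlinarith)
  rw [hs2] at hpot
  linear_combination hyoung + 2 * hpot + 4 * m * hcross

lemma contDiffOn_multiplier (σ : ℝ) : ContDiffOn ℝ 1 (fun x => 2 * σ - h3f m x) (Ioi 0) :=
  contDiffOn_const.sub (contDiffOn_h3f m)

variable {a b : ℝ}

lemma LocACC.intervalIntegrable_norm_sq_div (hu : LocACC u du) (ha : 0 < a) (hb : 0 < b) :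
    IntervalIntegrable (fun x => ‖u x‖ ^ 2 / x) volume a b := by
  have hpos : uIcc a b ⊆ Ioi 0 := ordConnected_Ioi.uIcc_subset ha hb
  exact ((hu.continuousOn.mono hpos).norm.pow 2).div continuousOn_id
    (fun x hx => (mem_Ioi.1 (hpos hx)).ne') |>.intervalIntegrable

lemma LocACC.mul_integral_norm_sq_div_le (hu : LocACC u du)
    (hL : IntegrableOn (fun x => ‖L0op m u du x‖ ^ 2 * x) (Ioi 0)) (ha : 0 < a) (hab : a ≤ b)
    {σ : ℝ} (hσ : σ ^ 2 = 1) (hσh : ∀ x ∈ Icc a b, 0 ≤ σ * h3f m x)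
    (hboundary : (2 * σ - h3f m a) * ‖u a‖ ^ 2 ≤ (2 * σ - h3f m b) * ‖u b‖ ^ 2) :
    m ^ 2 * ∫ x in a..b, ‖u x‖ ^ 2 / x ≤ 16 * ∫ x in a..b, ‖L0op m u du x‖ ^ 2 * x := by
  have hb : 0 < b := ha.trans_le hab
  have hpos : uIcc a b ⊆ Ioi 0 := ordConnected_Ioi.uIcc_subset ha hb
  obtain ⟨hflux, hflux_eq⟩ := integral_deriv_mul_norm_sq ((contDiffOn_multiplier σ).mono hpos)
    (fun x hx => (hasDerivAt_h3f m (hpos (uIoc_subset_uIcc hx))).const_sub (2 * σ))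
    (hu.intervalIntegrable ha hb) fun x hx y hy => hu.sub_eq_integral (hpos hx) (hpos hy)
  have hLi : IntervalIntegrable (fun x => ‖L0op m u du x‖ ^ 2 * x) volume a b :=
    (hL.mono_set hpos).intervalIntegrable
  have hui := hu.intervalIntegrable_norm_sq_div ha hb
  have hmono := intervalIntegral.integral_mono_on hab (hui.const_mul ((m : ℝ) ^ 2))
    ((hLi.const_mul 16).sub (hflux.const_mul (2 * m))) fun x hx =>
      norm_sq_div_le_of_multiplier (ha.trans_le hx.1) hσ (hσh x hx)
  rw [intervalIntegral.integral_sub (hLi.const_mul 16) (hflux.const_mul (2 * m)),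
    intervalIntegral.integral_const_mul, intervalIntegral.integral_const_mul,
    intervalIntegral.integral_const_mul, hflux_eq] at hmono
  refine hmono.trans (sub_le_self _ ?_)
  exact mul_nonneg (by positivity) (sub_nonneg.2 hboundary)

lemma LocACC.mul_integral_norm_sq_div_le_of_le_one (hu : LocACC u du) (hu1 : u 1 = 0)
    (hL : IntegrableOn (fun x => ‖L0op m u du x‖ ^ 2 * x) (Ioi 0)) (ha : 0 < a) (ha1 : a ≤ 1) :
    m ^ 2 * ∫ x in a..1, ‖u x‖ ^ 2 / x ≤ 16 * ∫ x in a..1, ‖L0op m u du x‖ ^ 2 * x := by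
  refine hu.mul_integral_norm_sq_div_le hL ha ha1 (σ := -1) (by norm_num) (fun x hx => ?_) ?_
  · linarith [h3f_nonpos m (ha.trans_le hx.1) hx.2]
  · rw [hu1, norm_zero, zero_pow two_ne_zero, mul_zero]
    exact mul_nonpos_of_nonpos_of_nonneg (by linarith [neg_le_of_abs_le (abs_h3f_le_one m ha)])
      (sq_nonneg _)

lemma LocACC.mul_integral_norm_sq_div_le_of_one_le (hu : LocACC u du) (hu1 : u 1 = 0)
    (hL : IntegrableOn (fun x => ‖L0op m u du x‖ ^ 2 * x) (Ioi 0)) (hb1 : 1 ≤ b) :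
    m ^ 2 * ∫ x in 1..b, ‖u x‖ ^ 2 / x ≤ 16 * ∫ x in 1..b, ‖L0op m u du x‖ ^ 2 * x := by
  refine hu.mul_integral_norm_sq_div_le hL one_pos hb1 (σ := 1) (by norm_num) (fun x hx => ?_) ?_
  · linarith [h3f_nonneg m hx.1]
  · rw [hu1, norm_zero, zero_pow two_ne_zero, mul_zero]
    exact mul_nonneg (by linarith [le_of_abs_le (abs_h3f_le_one m (one_pos.trans_le hb1))])
      (sq_nonneg _)

lemma LocACC.hardy_of_eq_zero (hm : 1 ≤ m) (hu : LocACC u du) (hu1 : u 1 = 0)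
    (hL : IntegrableOn (fun x => ‖L0op m u du x‖ ^ 2 * x) (Ioi 0)) :
    IntegrableOn (fun x => ‖u x‖ ^ 2 / x) (Ioi 0) ∧
      ∫ x in Ioi 0, ‖u x‖ ^ 2 / x ≤ 16 * ∫ x in Ioi 0, ‖L0op m u du x‖ ^ 2 * x := by
  refine integrableOn_Ioi_of_intervalIntegral_le
    (fun x hx => div_nonneg (sq_nonneg _) (mem_Ioi.1 hx).le)
    (fun a ha b hb => hu.intervalIntegrable_norm_sq_div ha.1 (one_pos.trans_le hb))
    fun a ⟨ha, ha1⟩ b (hb1 : 1 ≤ b) => ?_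
  have hb : 0 < b := one_pos.trans_le hb1
  have hm1 : (1 : ℝ) ≤ m ^ 2 := by exact_mod_cast Nat.one_le_pow _ _ hm
  have hLi : ∀ {s t : ℝ}, 0 < s → 0 < t →
      IntervalIntegrable (fun x => ‖L0op m u du x‖ ^ 2 * x) volume s t := fun hs ht =>
    (hL.mono_set (ordConnected_Ioi.uIcc_subset hs ht)).intervalIntegrable
  calc ∫ x in a..b, ‖u x‖ ^ 2 / x
      ≤ m ^ 2 * ∫ x in a..b, ‖u x‖ ^ 2 / x :=
        le_mul_of_one_le_left (intervalIntegral.integral_nonneg (ha1.trans hb1)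
          fun x hx => div_nonneg (sq_nonneg _) (ha.le.trans hx.1)) hm1
    _ ≤ 16 * ∫ x in a..b, ‖L0op m u du x‖ ^ 2 * x := by
        rw [← intervalIntegral.integral_add_adjacent_intervals
          (hu.intervalIntegrable_norm_sq_div ha one_pos)
          (hu.intervalIntegrable_norm_sq_div one_pos hb),
          ← intervalIntegral.integral_add_adjacent_intervals (hLi ha one_pos) (hLi one_pos hb),
          mul_add, mul_add]
        exact add_le_add (hu.mul_integral_norm_sq_div_le_of_le_one hu1 hL ha ha1)
          (hu.mul_integral_norm_sq_div_le_of_one_le hu1 hL hb1)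
    _ ≤ 16 * ∫ x in Ioi 0, ‖L0op m u du x‖ ^ 2 * x := by
        rw [intervalIntegral.integral_of_le (ha1.trans hb1)]
        gcongr
        · exact ae_restrict_of_forall_mem measurableSet_Ioi fun x (hx : 0 < x) =>
            mul_nonneg (sq_nonneg _) hx.le
        · exact fun x hx => ha.trans hx.1

end Hardy

section Coercivity

variable {m : ℕ} {w : ℝ → ℂ}

lemma aestronglyMeasurable_of_h1f_mul
    (hw : AEStronglyMeasurable (fun ρ => (h1f m ρ : ℂ) * w ρ) (volume.restrict (Ioi 0))) :
    AEStronglyMeasurable w (volume.restrict (Ioi 0)) := by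
  have hh1 : AEStronglyMeasurable (fun ρ => (h1f m ρ : ℂ)⁻¹) (volume.restrict (Ioi 0)) :=
    ((Complex.continuous_ofReal.comp_continuousOn (continuousOn_h1f m)).aestronglyMeasurable
      measurableSet_Ioi).inv₀
  refine (hh1.mul hw).congr (ae_restrict_of_forall_mem measurableSet_Ioi fun ρ hρ => ?_)
  exact inv_mul_cancel_left₀ (Complex.ofReal_ne_zero.2 (h1f_pos m hρ).ne') _

lemma integral_norm_sq_div_le_of_eq_add (hm : 1 ≤ m) {z u : ℝ → ℂ} {c : ℂ}
    (hz : ContinuousOn z (Ioi 0)) (hzu : ∀ ρ, z ρ = c * h1f m ρ + u ρ)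
    (hu : IntegrableOn (fun ρ => ‖u ρ‖ ^ 2 / ρ) (Ioi 0)) :
    IntegrableOn (fun ρ => ‖z ρ‖ ^ 2 / ρ) (Ioi 0) ∧ ∫ ρ in Ioi 0, ‖z ρ‖ ^ 2 / ρ ≤
      2 * ‖c‖ ^ 2 * (∫ ρ in Ioi 0, h1f m ρ ^ 2 / ρ) + 2 * ∫ ρ in Ioi 0, ‖u ρ‖ ^ 2 / ρ := by
  have hh1 := (integrableOn_h1f_sq_div hm).const_mul (2 * ‖c‖ ^ 2)
  have hle : ∀ ρ ∈ Ioi (0 : ℝ), ‖z ρ‖ ^ 2 / ρ ≤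
      2 * ‖c‖ ^ 2 * (h1f m ρ ^ 2 / ρ) + 2 * (‖u ρ‖ ^ 2 / ρ) := fun ρ (hρ : 0 < ρ) => by
    calc ‖z ρ‖ ^ 2 / ρ ≤ (2 * ‖c * h1f m ρ‖ ^ 2 + 2 * ‖u ρ‖ ^ 2) / ρ := by
          grw [hzu, norm_add_sq_le]
      _ = 2 * ‖c‖ ^ 2 * (h1f m ρ ^ 2 / ρ) + 2 * (‖u ρ‖ ^ 2 / ρ) := by
          rw [norm_mul, Complex.norm_real, mul_pow, Real.norm_eq_abs, sq_abs]
          ring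
  have hint : IntegrableOn (fun ρ => ‖z ρ‖ ^ 2 / ρ) (Ioi 0) := by
    refine (hh1.add (hu.const_mul 2)).mono' (((hz.norm.pow 2).div continuousOn_id
      fun ρ hρ => (mem_Ioi.1 hρ).ne').aestronglyMeasurable measurableSet_Ioi)
      (ae_restrict_of_forall_mem measurableSet_Ioi fun ρ hρ => ?_)
    rw [Real.norm_of_nonneg (div_nonneg (sq_nonneg _) (mem_Ioi.1 hρ).le)]
    exact hle ρ hρ
  refine ⟨hint, (setIntegral_mono_on hint (hh1.add (hu.const_mul 2)) measurableSet_Ioi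
    hle).trans_eq ?_⟩
  simp only [Pi.add_apply]
  rw [integral_add hh1 (hu.const_mul 2), integral_const_mul, integral_const_mul]

/-- The constant in the weighted `L²` bound for `z` by `L₀ z` when `∫ z w = 0`. It is meaningful
only if `∫ h₁ w ≠ 0`; otherwise the junk value of the division makes it `32`. -/
def coercivityConst (m : ℕ) (w : ℝ → ℂ) : ℝ :=
  32 * (1 + (∫ ρ in Ioi 0, h1f m ρ ^ 2 / ρ) * (∫ ρ in Ioi 0, ‖w ρ‖ ^ 2 * ρ) /
    ‖∫ ρ in Ioi 0, (h1f m ρ : ℂ) * w ρ‖ ^ 2)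

lemma integral_h1f_sq_div_nonneg (m : ℕ) : 0 ≤ ∫ ρ in Ioi 0, h1f m ρ ^ 2 / ρ :=
  setIntegral_nonneg measurableSet_Ioi fun _ hρ => div_nonneg (sq_nonneg _) (mem_Ioi.1 hρ).le

lemma coercivityConst_nonneg (m : ℕ) (w : ℝ → ℂ) : 0 ≤ coercivityConst m w := by
  have hA := integral_h1f_sq_div_nonneg m
  have hB : 0 ≤ ∫ ρ in Ioi 0, ‖w ρ‖ ^ 2 * ρ :=
    setIntegral_nonneg measurableSet_Ioi fun ρ hρ => mul_nonneg (sq_nonneg _) (mem_Ioi.1 hρ).le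
  rw [coercivityConst]
  positivity

lemma norm_sq_le_of_integral_add_mul_eq_zero {u : ℝ → ℂ} {c : ℂ} (hu : ContinuousOn u (Ioi 0))
    (hu2 : IntegrableOn (fun ρ => ‖u ρ‖ ^ 2 / ρ) (Ioi 0))
    (hw : IntegrableOn (fun ρ => ‖w ρ‖ ^ 2 * ρ) (Ioi 0))
    (hN : ∫ ρ in Ioi 0, (h1f m ρ : ℂ) * w ρ ≠ 0)
    (horth : ∫ ρ in Ioi 0, (c * h1f m ρ + u ρ) * w ρ = 0) :
    ‖c‖ ^ 2 ≤ (∫ ρ in Ioi 0, ‖u ρ‖ ^ 2 / ρ) * (∫ ρ in Ioi 0, ‖w ρ‖ ^ 2 * ρ) /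
      ‖∫ ρ in Ioi 0, (h1f m ρ : ℂ) * w ρ‖ ^ 2 := by
  have hh1w : IntegrableOn (fun ρ => (h1f m ρ : ℂ) * w ρ) (Ioi 0) :=
    not_imp_comm.1 integral_undef hN
  rw [le_div_iff₀ (by positivity), ← mul_pow]
  exact norm_coeff_mul_sq_le_of_integral_eq_zero aemeasurable_id
    (ae_restrict_mem measurableSet_Ioi) (hu.aestronglyMeasurable measurableSet_Ioi)
    (aestronglyMeasurable_of_h1f_mul hh1w.aestronglyMeasurable) hu2 hw hh1w horth

lemma LocACC.integral_norm_sq_div_le {z dz : ℝ → ℂ} (hz : LocACC z dz) (hm : 1 ≤ m)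
    (hw : IntegrableOn (fun ρ => ‖w ρ‖ ^ 2 * ρ) (Ioi 0))
    (hN : ∫ ρ in Ioi 0, (h1f m ρ : ℂ) * w ρ ≠ 0)
    (hL : IntegrableOn (fun ρ => ‖L0op m z dz ρ‖ ^ 2 * ρ) (Ioi 0))
    (horth : ∫ ρ in Ioi 0, z ρ * w ρ = 0) :
    IntegrableOn (fun ρ => ‖z ρ‖ ^ 2 / ρ) (Ioi 0) ∧ ∫ ρ in Ioi 0, ‖z ρ‖ ^ 2 / ρ ≤
      coercivityConst m w * ∫ ρ in Ioi 0, ‖L0op m z dz ρ‖ ^ 2 * ρ := by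
  set u : ℝ → ℂ := fun ρ => z ρ - z 1 * h1f m ρ with hu_def
  have hu : LocACC u (fun ρ => dz ρ - z 1 * dhProf m ρ 0) := hz.sub_const_mul (locACC_h1f m) (z 1)
  have hzu : ∀ ρ, z ρ = z 1 * h1f m ρ + u ρ := fun ρ => (add_sub_cancel _ _).symm
  have hu1 : u 1 = 0 := by simp only [hu_def, h1f_one, Complex.ofReal_one, mul_one, sub_self]
  have hLu := L0op_sub_const_mul_h1f m z dz (z 1)
  obtain ⟨hu2, hhardy⟩ := hu.hardy_of_eq_zero hm hu1 (by rwa [hLu])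
  rw [hLu] at hhardy
  have horthu : ∫ ρ in Ioi 0, (z 1 * h1f m ρ + u ρ) * w ρ = 0 := by simpa only [← hzu] using horth
  have hcoeff := norm_sq_le_of_integral_add_mul_eq_zero hu.continuousOn hu2 hw hN horthu
  obtain ⟨hz2, hle⟩ := integral_norm_sq_div_le_of_eq_add hm hz.continuousOn hzu hu2
  refine ⟨hz2, hle.trans ?_⟩
  calc 2 * ‖z 1‖ ^ 2 * (∫ ρ in Ioi 0, h1f m ρ ^ 2 / ρ) + 2 * ∫ ρ in Ioi 0, ‖u ρ‖ ^ 2 / ρ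
      ≤ coercivityConst m w / 16 * ∫ ρ in Ioi 0, ‖u ρ‖ ^ 2 / ρ := by
        grw [hcoeff]
        · exact le_of_eq (by rw [coercivityConst]; ring)
        · exact integral_h1f_sq_div_nonneg m
    _ ≤ coercivityConst m w / 16 * (16 * ∫ ρ in Ioi 0, ‖L0op m z dz ρ‖ ^ 2 * ρ) :=
        mul_le_mul_of_nonneg_left hhardy (div_nonneg (coercivityConst_nonneg m w) (by norm_num))
    _ = coercivityConst m w * ∫ ρ in Ioi 0, ‖L0op m z dz ρ‖ ^ 2 * ρ := by ring

theorem statement9_general (m : ℕ) (hm : 1 ≤ m) (w : ℝ → ℂ)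
    (hw : IntegrableOn (fun ρ => ‖w ρ‖ ^ 2 * ρ) (Ioi 0))
    (hN : ∫ ρ in Ioi 0, (h1f m ρ : ℂ) * w ρ ≠ 0) :
    ∃ C > (0 : ℝ), ∀ z dz : ℝ → ℂ, LocACC z dz →
      IntegrableOn (fun ρ => ‖L0op m z dz ρ‖ ^ 2 * ρ) (Ioi 0) →
      ∫ ρ in Ioi 0, z ρ * w ρ = 0 →
      IntegrableOn (xDen z dz) (Ioi 0) ∧
        normX z dz ≤ C * √(∫ ρ in Ioi 0, ‖L0op m z dz ρ‖ ^ 2 * ρ) := by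
  have hK := coercivityConst_nonneg m w
  refine ⟨√(2 + (2 * m ^ 2 + 1) * coercivityConst m w), by positivity,
    fun z dz hz hL horth => ?_⟩
  obtain ⟨hz2, hz2_le⟩ := hz.integral_norm_sq_div_le hm hw hN hL horth
  obtain ⟨hX, hX_le⟩ := hz.integrableOn_xDen hL hz2
  refine ⟨hX, ?_⟩
  rw [normX, ← Real.sqrt_mul (by positivity)]
  gcongr
  calc ∫ ρ in Ioi 0, xDen z dz ρ
      ≤ 2 * (∫ ρ in Ioi 0, ‖L0op m z dz ρ‖ ^ 2 * ρ) + (2 * m ^ 2 + 1) *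
          (coercivityConst m w * ∫ ρ in Ioi 0, ‖L0op m z dz ρ‖ ^ 2 * ρ) := by grw [hX_le, hz2_le]
    _ = (2 + (2 * m ^ 2 + 1) * coercivityConst m w) *
          ∫ ρ in Ioi 0, ‖L0op m z dz ρ‖ ^ 2 * ρ := by ring

end Coercivity

lemma integral_h1f_mul_h1f_mul_ne_zero {m : ℕ} (hm : 3 ≤ m) :
    ∫ ρ in Ioi 0, (h1f m ρ : ℂ) * ((h1f m ρ * ρ : ℝ) : ℂ) ≠ 0 := by
  simp only [← Complex.ofReal_mul, ← mul_assoc, ← sq]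
  rw [integral_complex_ofReal]
  exact Complex.ofReal_ne_zero.2 (integral_h1f_sq_mul_pos hm).ne'

lemma integrableOn_norm_h1f_mul_sq_mul {m : ℕ} (hm : 3 ≤ m) :
    IntegrableOn (fun ρ => ‖((h1f m ρ * ρ : ℝ) : ℂ)‖ ^ 2 * ρ) (Ioi 0) := by
  refine (integrableOn_h1f_sq_mul_pow_three hm).congr_fun (fun ρ _ => ?_) measurableSet_Ioi
  simp only [Complex.norm_real, Real.norm_eq_abs, sq_abs]
  ring

/-- **Coercivity of L₀ under orthogonality to h₁ (X-norm version).** For m ≥ 3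
there is C = C(m) such that if z has finite X-norm and ∫ z h₁ ρ dρ = 0, then
‖z‖_X ≤ C ‖L₀ z‖_{L²(ρ dρ)}. -/
theorem statement9 (m : ℕ) (hm : 3 ≤ m) :
    ∃ C > (0:ℝ), ∀ z dz : ℝ → ℂ,
      LocACC z dz →
      IntegrableOn (xDen z dz) (Ioi (0:ℝ)) →
      (∫ ρ in Ioi (0:ℝ), z ρ * ((h1f m ρ * ρ : ℝ) : ℂ)) = 0 →
      normX z dz ≤ C * Real.sqrt (∫ ρ in Ioi (0:ℝ), ‖L0op m z dz ρ‖ ^ 2 * ρ) := by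
  obtain ⟨C, hC, hbound⟩ := statement9_general m (by omega) _
    (integrableOn_norm_h1f_mul_sq_mul hm) (integral_h1f_mul_h1f_mul_ne_zero hm)
  exact ⟨C, hC, fun z dz hz hX horth =>
    (hbound z dz hz (hz.integrableOn_norm_L0op_sq_mul hX) horth).2⟩

end
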